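/- Let (A_n)_{n≥0} be an Appell sequence in ℚ[X], i.e. A_0 = 1 and A_n' = n·A_{n−1} for all n ≥ 1 (so A_n is monic of degree n), and set z_1 = A_1(0), z_2 = A_2(0). Let λ be a partition with |λ| = n ≥ 2 and degree vector (n_1,…,n_ℓ), and define the Wronskian Appell polynomial A_λ := det((d/dX)^{i−1} A_{n_j})_{i,j=1}^{ℓ} / Δ(n_λ) ∈ ℚ[X]. Then coeff_n(A_λ) = 1, coeff_{n−1}(A_λ) = n·z_1, and coeff_{n−2}(A_λ) = c(λ)·(z_2 − z_1²) + C(n,2)·z_1², where c(λ) is the content sum of λ. -/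

import Mathlib

/-- A partition: a weakly decreasing list of positive integers. -/
def IsPartition (l : List ℕ) : Prop :=
  l.Pairwise (· ≥ ·) ∧ ∀ x ∈ l, 0 < x

/-- The degree vector of a partition: `n_i = λ_i + ℓ(λ) − i` (here `i` is 0-indexed). -/
def degVec (l : List ℕ) (i : Fin l.length) : ℕ :=
  l.get i + (l.length - 1 - (i : ℕ))

/-- The Vandermonde determinant `Δ(n_λ) = ∏_{i<j} (n_j − n_i)` of the degree vector. -/
noncomputable def vanderQ (l : List ℕ) : ℚ :=
  ∏ i : Fin l.length, ∏ j : Fin l.length,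
    if (i : ℕ) < (j : ℕ) then ((degVec l j : ℚ) - (degVec l i : ℚ)) else 1

/-- The content sum `c(λ) = Σ_{(i,j)∈λ} (j − i)`. -/
def contentSum (l : List ℕ) : ℤ :=
  ∑ i : Fin l.length, ∑ j ∈ Finset.Icc 1 (l.get i), ((j : ℤ) - ((i : ℕ) + 1))

/-- The Wronskian Appell polynomial
`A_λ = det((d/dX)^{i−1} A_{n_j})_{i,j} / Δ(n_λ)`. -/
noncomputable def wrAppell (A : ℕ → Polynomial ℚ) (l : List ℕ) : Polynomial ℚ :=
  Polynomial.C (vanderQ l)⁻¹ *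
    (Matrix.of fun i j : Fin l.length =>
      (⇑Polynomial.derivative)^[(i : ℕ)] (A (degVec l j))).det

/-!
Write `z = A₁(0)` and `w = A₂(0) - z²`. In its top three degrees `A_n` agrees with
`(X + z)ⁿ + C(n,2) w Xⁿ⁻²`, and such expansions multiply: the degrees add, and so do the
coefficients of `w`. With `(m)ᵢ = m (m-1) ⋯ (m-i+1)`, the `i`-th derivative of `A_n` is
`(n)ᵢ A_{n-i}`, so the `σ`-term of the Leibniz expansion of the Wronskian has leading coefficient
`D_σ = ∏ᵢ (n_{σi})ᵢ` and `w`-coefficient `D_σ ∑ᵢ C(xᵢ,2)`, where `xᵢ = n_{σi} - i` and `0 ≤ i < ℓ`.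
The signed sum of the `D_σ` is the Vandermonde determinant. Moreover `∑ᵢ (C(xᵢ,2) - (ℓ-1-i) xᵢ)`
does not depend on `σ`, and equals the content sum. The correction terms `(ℓ-1-i) xᵢ` contribute
nothing, because multiplying `D_σ` by `xᵢ` turns column `i` of the matrix of falling factorials
into a copy of column `i + 1`.
-/

section Appell

open Polynomial Finset

theorem choose_two_add (m n : ℕ) : (m + n).choose 2 = m.choose 2 + n.choose 2 + m * n := by
  simp only [Nat.add_choose_eq, Nat.sum_antidiagonal_eq_sum_range_succ_mk, sum_range_succ,
    sum_range_zero, tsub_zero, tsub_self, Nat.add_one_sub_one, Nat.choose_zero_right,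
    Nat.choose_one_right]
  ring

variable {R : Type*} [CommRing R]

/-- `HasTopCoeffs z w n a b p` says that `p` has degree at most `n` and agrees with
`a (X + z)ⁿ + b w Xⁿ⁻²` in the degrees `n`, `n - 1` and `n - 2`. The coefficients are read off the
reflected polynomial, which is `0` in degrees above `n`, so that no truncated subtraction occurs. -/
structure HasTopCoeffs (z w : R) (n : ℕ) (a b : R) (p : R[X]) : Prop where
  natDegree_le : p.natDegree ≤ n
  reflect_coeff_zero : (reflect n p).coeff 0 = a
  reflect_coeff_one : (reflect n p).coeff 1 = a * (n * z)
  reflect_coeff_two : (reflect n p).coeff 2 = b * w + a * (n.choose 2 * z ^ 2)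

namespace HasTopCoeffs

variable {z w : R} {n : ℕ} {a b : R} {p : R[X]}

theorem coeff_self (hp : HasTopCoeffs z w n a b p) : p.coeff n = a := by
  simpa [coeff_reflect] using hp.reflect_coeff_zero

theorem coeff_sub_one (hp : HasTopCoeffs z w n a b p) (hn : 1 ≤ n) :
    p.coeff (n - 1) = a * (n * z) := by
  simpa only [coeff_reflect, revAt_le hn] using hp.reflect_coeff_one

theorem coeff_sub_two (hp : HasTopCoeffs z w n a b p) (hn : 2 ≤ n) :
    p.coeff (n - 2) = b * w + a * (n.choose 2 * z ^ 2) := by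
  simpa only [coeff_reflect, revAt_le hn] using hp.reflect_coeff_two

theorem zero : HasTopCoeffs z w n 0 0 0 := by
  constructor <;> simp

theorem one : HasTopCoeffs z w 0 1 0 1 := by
  constructor <;> simp [coeff_one]

theorem add {a' b' : R} {q : R[X]} (hp : HasTopCoeffs z w n a b p)
    (hq : HasTopCoeffs z w n a' b' q) : HasTopCoeffs z w n (a + a') (b + b') (p + q) where
  natDegree_le := natDegree_add_le_of_degree_le hp.natDegree_le hq.natDegree_le
  reflect_coeff_zero := by
    rw [reflect_add, coeff_add, hp.reflect_coeff_zero, hq.reflect_coeff_zero]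
  reflect_coeff_one := by
    rw [reflect_add, coeff_add, hp.reflect_coeff_one, hq.reflect_coeff_one]
    ring
  reflect_coeff_two := by
    rw [reflect_add, coeff_add, hp.reflect_coeff_two, hq.reflect_coeff_two]
    ring

theorem C_mul (hp : HasTopCoeffs z w n a b p) (c : R) :
    HasTopCoeffs z w n (c * a) (c * b) (C c * p) where
  natDegree_le := (natDegree_C_mul_le c p).trans hp.natDegree_le
  reflect_coeff_zero := by rw [reflect_C_mul, coeff_C_mul, hp.reflect_coeff_zero]
  reflect_coeff_one := by
    rw [reflect_C_mul, coeff_C_mul, hp.reflect_coeff_one]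
    ring
  reflect_coeff_two := by
    rw [reflect_C_mul, coeff_C_mul, hp.reflect_coeff_two]
    ring

theorem sum {ι : Type*} {s : Finset ι} {a b : ι → R} {p : ι → R[X]}
    (hp : ∀ i ∈ s, HasTopCoeffs z w n (a i) (b i) (p i)) :
    HasTopCoeffs z w n (∑ i ∈ s, a i) (∑ i ∈ s, b i) (∑ i ∈ s, p i) := by
  classical
  induction s using Finset.induction_on with
  | empty => simpa only [sum_empty] using zero
  | insert i s hi ih =>
    simp only [sum_insert hi]
    exact (hp i (mem_insert_self i s)).add (ih fun j hj => hp j (mem_insert_of_mem hj))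

theorem mul {m : ℕ} {a' b' : R} {q : R[X]} (hp : HasTopCoeffs z w n a b p)
    (hq : HasTopCoeffs z w m a' b' q) :
    HasTopCoeffs z w (n + m) (a * a') (a * b' + b * a') (p * q) where
  natDegree_le := natDegree_mul_le_of_le hp.natDegree_le hq.natDegree_le
  reflect_coeff_zero := by
    rw [reflect_mul p q hp.natDegree_le hq.natDegree_le, mul_coeff_zero, hp.reflect_coeff_zero,
      hq.reflect_coeff_zero]
  reflect_coeff_one := by
    rw [reflect_mul p q hp.natDegree_le hq.natDegree_le, mul_coeff_one, hp.reflect_coeff_zero,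
      hp.reflect_coeff_one, hq.reflect_coeff_zero, hq.reflect_coeff_one]
    push_cast
    ring
  reflect_coeff_two := by
    rw [reflect_mul p q hp.natDegree_le hq.natDegree_le, coeff_mul,
      Nat.sum_antidiagonal_eq_sum_range_succ_mk]
    simp only [sum_range_succ, sum_range_zero, zero_add, tsub_zero, tsub_self, Nat.add_one_sub_one,
      hp.reflect_coeff_zero, hp.reflect_coeff_one, hp.reflect_coeff_two,
      hq.reflect_coeff_zero, hq.reflect_coeff_one, hq.reflect_coeff_two, choose_two_add]
    push_cast
    ring

theorem prod {ι : Type*} {s : Finset ι} {n : ι → ℕ} {b : ι → R} {p : ι → R[X]}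
    (hp : ∀ i ∈ s, HasTopCoeffs z w (n i) 1 (b i) (p i)) :
    HasTopCoeffs z w (∑ i ∈ s, n i) 1 (∑ i ∈ s, b i) (∏ i ∈ s, p i) := by
  classical
  induction s using Finset.induction_on with
  | empty => simpa only [sum_empty, prod_empty] using one
  | insert i s hi ih =>
    simp only [sum_insert hi, prod_insert hi]
    simpa only [one_mul, mul_one, add_comm] using
      (hp i (mem_insert_self i s)).mul (ih fun j hj => hp j (mem_insert_of_mem hj))

end HasTopCoeffs

/-- An Appell sequence: `A₀ = 1`, and the derivative of `Aₙ` is `n Aₙ₋₁` for `n ≥ 1`. -/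
structure IsAppell (A : ℕ → R[X]) : Prop where
  zero_eq : A 0 = 1
  derivative_eq : ∀ n, 1 ≤ n → derivative (A n) = (n : R) • A (n - 1)

namespace IsAppell

variable {A : ℕ → R[X]}

theorem iterate_derivative (hA : IsAppell A) (n i : ℕ) :
    derivative^[i] (A n) = C (n.descFactorial i : R) * A (n - i) := by
  induction i with
  | zero => simp
  | succ i ih =>
    rw [Function.iterate_succ_apply', ih, derivative_C_mul, Nat.descFactorial_succ]
    rcases Nat.eq_zero_or_pos (n - i) with h | h
    · simp [h, hA.zero_eq]
    · rw [hA.derivative_eq _ h, Nat.sub_sub, smul_eq_C_mul]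
      simp only [Nat.cast_mul, C_mul]
      ring

variable [IsAddTorsionFree R]

theorem coeff_eq (hA : IsAppell A) (n k : ℕ) :
    (A n).coeff k = n.choose k * (A (n - k)).coeff 0 := by
  induction k generalizing n with
  | zero => simp
  | succ k ih =>
    cases n with
    | zero => simp [hA.zero_eq, coeff_one]
    | succ n =>
      have hcoeff := congrArg (coeff · k) (hA.derivative_eq (n + 1) n.succ_pos)
      simp only [coeff_derivative, coeff_smul, smul_eq_mul, Nat.add_sub_cancel, ih n] at hcoeff
      have hchoose : ((n + 1 : ℕ) : R) * n.choose k = (n + 1).choose (k + 1) * (k + 1 : ℕ) :=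
        mod_cast congrArg (Nat.cast (R := R)) (Nat.add_one_mul_choose_eq n k)
      refine nsmul_right_injective k.succ_ne_zero ?_
      simp only [nsmul_eq_mul, Nat.add_sub_add_right]
      calc ((k + 1 : ℕ) : R) * (A (n + 1)).coeff (k + 1)
          = (A (n + 1)).coeff (k + 1) * (k + 1) := by push_cast; ring
        _ = ((n + 1 : ℕ) * n.choose k) * (A (n - k)).coeff 0 := by rw [hcoeff, mul_assoc]
        _ = (k + 1 : ℕ) * ((n + 1).choose (k + 1) * (A (n - k)).coeff 0) := by rw [hchoose]; ring

theorem natDegree_le (hA : IsAppell A) (n : ℕ) : (A n).natDegree ≤ n := by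
  refine natDegree_le_iff_coeff_eq_zero.2 fun k hk => ?_
  rw [hA.coeff_eq, Nat.choose_eq_zero_of_lt hk, Nat.cast_zero, zero_mul]

theorem reflect_coeff (hA : IsAppell A) (n k : ℕ) :
    (reflect n (A n)).coeff k = n.choose k * (A k).coeff 0 := by
  rw [coeff_reflect]
  rcases le_or_gt k n with h | h
  · rw [revAt_le h, hA.coeff_eq, Nat.choose_symm h, Nat.sub_sub_self h]
  · rw [revAt_eq_self_of_lt h, hA.coeff_eq, Nat.choose_eq_zero_of_lt h, Nat.cast_zero, zero_mul,
      zero_mul]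

theorem hasTopCoeffs (hA : IsAppell A) (n : ℕ) :
    HasTopCoeffs ((A 1).eval 0) ((A 2).eval 0 - (A 1).eval 0 ^ 2) n 1 (n.choose 2) (A n) where
  natDegree_le := hA.natDegree_le n
  reflect_coeff_zero := by simp [hA.reflect_coeff, hA.zero_eq]
  reflect_coeff_one := by simp [hA.reflect_coeff, coeff_zero_eq_eval_zero]
  reflect_coeff_two := by
    rw [hA.reflect_coeff, coeff_zero_eq_eval_zero]
    ring

theorem hasTopCoeffs_prod_iterate_derivative (hA : IsAppell A) {ι : Type*} {s : Finset ι}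
    {n k : ι → ℕ} {N : ℕ} (hN : ∑ i ∈ s, n i = N + ∑ i ∈ s, k i) :
    HasTopCoeffs ((A 1).eval 0) ((A 2).eval 0 - (A 1).eval 0 ^ 2) N
      (∏ i ∈ s, ((n i).descFactorial (k i) : R))
      ((∏ i ∈ s, ((n i).descFactorial (k i) : R)) * ∑ i ∈ s, ((n i - k i).choose 2 : R))
      (∏ i ∈ s, derivative^[k i] (A (n i))) := by
  simp only [hA.iterate_derivative, prod_mul_distrib, ← map_prod]
  by_cases hle : ∀ i ∈ s, k i ≤ n i
  · have hdeg : ∑ i ∈ s, (n i - k i) = N := by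
      rw [sum_tsub_distrib s hle, hN, Nat.add_sub_cancel]
    have hprod := (HasTopCoeffs.prod (s := s) fun i _ => hA.hasTopCoeffs (n i - k i)).C_mul
      (∏ i ∈ s, ((n i).descFactorial (k i) : R))
    rwa [hdeg, mul_one] at hprod
  · obtain ⟨i, hi, hlt⟩ : ∃ i ∈ s, n i < k i := by simpa using hle
    have hzero : ∏ i ∈ s, ((n i).descFactorial (k i) : R) = 0 :=
      prod_eq_zero hi (by rw [Nat.descFactorial_of_lt hlt, Nat.cast_zero])
    simpa only [hzero, C_0, zero_mul] using HasTopCoeffs.zero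

end IsAppell

section FallingFactorial

variable {L : ℕ}

theorem cast_descFactorial_succ (n k : ℕ) :
    (n.descFactorial (k + 1) : R) = n.descFactorial k * (n - k) := by
  simp only [← descPochhammer_eval_eq_descFactorial, descPochhammer_succ_eval]

theorem det_descFactorial (n : Fin L → ℕ) :
    (Matrix.of fun j i : Fin L => ((n j).descFactorial i : R)).det
      = (Matrix.vandermonde fun i => (n i : R)).det := by
  nontriviality R
  have hmonic (i : ℕ) := monic_descPochhammer ℤ i
  rw [Matrix.det_eval_matrixOfPolynomials_eq_det_vandermonde (fun i => (n i : R))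
    (fun i => (descPochhammer ℤ i).map (Int.castRingHom R))
    (fun i => by rw [(hmonic i).natDegree_map, descPochhammer_natDegree])
    (fun i => (hmonic i).map _)]
  simp only [descPochhammer_map, descPochhammer_eval_eq_descFactorial]

theorem sum_sign_mul_prod_descFactorial (n : Fin L → ℕ) :
    ∑ σ : Equiv.Perm (Fin L), ((Equiv.Perm.sign σ : ℤ) : R) *
      ∏ i, ((n (σ i)).descFactorial i : R) = (Matrix.vandermonde fun i => (n i : R)).det := by
  rw [← det_descFactorial, Matrix.det_apply']
  simp only [Matrix.of_apply]

theorem sum_sign_mul_prod_descFactorial_mul_sub (n : Fin L → ℕ) (k : Fin L)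
    (hk : (k : ℕ) + 1 < L) :
    ∑ σ : Equiv.Perm (Fin L), ((Equiv.Perm.sign σ : ℤ) : R) *
      ((∏ i, ((n (σ i)).descFactorial i : R)) * (n (σ k) - (k : ℕ))) = 0 := by
  have hne : k ≠ ⟨k + 1, hk⟩ := Fin.ne_of_val_ne (Nat.ne_of_lt k.val.lt_succ_self)
  have hdet : (Matrix.of fun j i : Fin L =>
      ((n j).descFactorial i : R) * if i = k then (n j - (k : ℕ) : R) else 1).det = 0 :=
    Matrix.det_zero_of_column_eq hne fun j => by
      simp only [Matrix.of_apply, if_true, if_neg hne.symm, mul_one, cast_descFactorial_succ]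
  simpa only [Matrix.det_apply', Matrix.of_apply, prod_mul_distrib, prod_ite_eq', mem_univ,
    if_true] using hdet

/-- The content sum of a partition, as a function of its degree vector `n`:
it equals `∑ᵢ (C(nᵢ - i, 2) - (L - 1 - i)(nᵢ - i))`, here separated into terms in
`nᵢ` alone and terms in `i` alone, so that it is visibly symmetric in `n`. -/
def degContent (n : Fin L → ℕ) : ℤ :=
  ∑ i, ((n i).choose 2 - ((L : ℤ) - 1) * n i) - ∑ i : Fin L, ((i : ℕ).choose 2 - ((L : ℤ) - 1) * i)

theorem degContent_comp_perm (n : Fin L → ℕ) (σ : Equiv.Perm (Fin L)) :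
    degContent (n ∘ σ) = degContent n := by
  simp only [degContent, Function.comp_apply,
    Equiv.sum_comp σ fun i => ((n i).choose 2 - ((L : ℤ) - 1) * n i)]

theorem sum_choose_two_sub {n : Fin L → ℕ} (hn : ∀ i : Fin L, (i : ℕ) ≤ n i) :
    ∑ i : Fin L, ((n i - i).choose 2 : ℤ)
      = degContent n + ∑ i : Fin L, ((L : ℤ) - 1 - i) * (n i - i) := by
  rw [degContent, ← sum_sub_distrib, ← sum_add_distrib]
  refine sum_congr rfl fun i _ => ?_
  obtain ⟨x, hx⟩ := Nat.exists_eq_add_of_le (hn i)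
  simp only [hx, Nat.add_sub_cancel_left, choose_two_add]
  push_cast
  ring

theorem prod_descFactorial_mul_sum_choose_two (n : Fin L → ℕ) :
    (∏ i, ((n i).descFactorial i : R)) * ∑ i : Fin L, ((n i - i).choose 2 : R)
      = (∏ i, ((n i).descFactorial i : R)) * degContent n
        + ∑ i : Fin L, ((L : R) - 1 - (i : ℕ)) *
          ((∏ i, ((n i).descFactorial i : R)) * (n i - (i : ℕ))) := by
  by_cases hn : ∀ i : Fin L, (i : ℕ) ≤ n i
  · have hsum := congrArg (Int.cast (R := R)) (sum_choose_two_sub hn)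
    push_cast at hsum
    rw [hsum, mul_add, mul_sum]
    simp only [mul_left_comm]
  · obtain ⟨i, hi⟩ : ∃ i : Fin L, n i < i := by simpa using hn
    have hzero : ∏ i, ((n i).descFactorial i : R) = 0 :=
      prod_eq_zero (mem_univ i) (by rw [Nat.descFactorial_of_lt hi, Nat.cast_zero])
    simp only [hzero, zero_mul, mul_zero, sum_const_zero, add_zero]

theorem sum_sign_mul_prod_descFactorial_mul_sum_choose_two (n : Fin L → ℕ) :
    ∑ σ : Equiv.Perm (Fin L), ((Equiv.Perm.sign σ : ℤ) : R) *
      ((∏ i, ((n (σ i)).descFactorial i : R)) * ∑ i : Fin L, ((n (σ i) - i).choose 2 : R))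
      = (Matrix.vandermonde fun i => (n i : R)).det * degContent n := by
  have hexpand (σ : Equiv.Perm (Fin L)) := prod_descFactorial_mul_sum_choose_two (R := R) (n ∘ σ)
  simp only [degContent_comp_perm, Function.comp_apply] at hexpand
  have hcorrection (i : Fin L) : ((L : R) - 1 - (i : ℕ)) *
      ∑ σ : Equiv.Perm (Fin L), ((Equiv.Perm.sign σ : ℤ) : R) *
        ((∏ j, ((n (σ j)).descFactorial j : R)) * (n (σ i) - (i : ℕ))) = 0 := by
    rcases Nat.lt_or_eq_of_le i.isLt with hi | hi
    · rw [sum_sign_mul_prod_descFactorial_mul_sub n i hi, mul_zero]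
    · have hcast : (L : R) = (i : ℕ) + 1 := mod_cast congrArg (Nat.cast (R := R)) hi.symm
      rw [hcast, add_sub_cancel_right, sub_self, zero_mul]
  simp only [hexpand, mul_add, sum_add_distrib, ← mul_assoc, ← sum_mul,
    sum_sign_mul_prod_descFactorial]
  simp only [mul_sum] at hcorrection ⊢
  rw [sum_comm, add_eq_left]
  refine sum_eq_zero fun i _ => (sum_congr rfl fun σ _ => ?_).trans (hcorrection i)
  ring

end FallingFactorial

/-- The Wronskian `det((d/dX)ⁱ A_{nⱼ})` of members of `A`, without the Vandermonde normalization. -/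
noncomputable def appellWronskian (A : ℕ → R[X]) {L : ℕ} (n : Fin L → ℕ) : R[X] :=
  (Matrix.of fun i j : Fin L => derivative^[(i : ℕ)] (A (n j))).det

theorem IsAppell.hasTopCoeffs_appellWronskian [IsAddTorsionFree R] {A : ℕ → R[X]}
    (hA : IsAppell A) {L : ℕ} {n : Fin L → ℕ} {N : ℕ} (hN : ∑ i, n i = N + ∑ i : Fin L, (i : ℕ)) :
    HasTopCoeffs ((A 1).eval 0) ((A 2).eval 0 - (A 1).eval 0 ^ 2) N
      (Matrix.vandermonde fun i => (n i : R)).det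
      ((Matrix.vandermonde fun i => (n i : R)).det * degContent n) (appellWronskian A n) := by
  rw [← sum_sign_mul_prod_descFactorial_mul_sum_choose_two, ← sum_sign_mul_prod_descFactorial,
    appellWronskian, ← Matrix.det_transpose, Matrix.det_apply']
  refine HasTopCoeffs.sum fun σ _ => ?_
  rw [← map_intCast (C : R →+* R[X])]
  exact (hA.hasTopCoeffs_prod_iterate_derivative
    ((Equiv.sum_comp σ n).trans hN)).C_mul _

end Appell

section DegreeVector

open Finset

theorem sum_degVec (l : List ℕ) :
    ∑ i, degVec l i = l.sum + ∑ i : Fin l.length, (i : ℕ) := by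
  have hrev : ∑ i : Fin l.length, (l.length - 1 - (i : ℕ)) = ∑ i : Fin l.length, (i : ℕ) := by
    rw [← Equiv.sum_comp Fin.revPerm fun i : Fin l.length => (i : ℕ)]
    exact sum_congr rfl fun i _ => by rw [Fin.revPerm_apply, Fin.val_rev]; omega
  simp only [degVec, sum_add_distrib, hrev, List.get_eq_getElem, Fin.sum_univ_getElem]

theorem degVec_strictAnti {l : List ℕ} (hl : l.Pairwise (· ≥ ·)) : StrictAnti (degVec l) := by
  intro i j hij
  have hget := List.pairwise_iff_get.1 hl i j hij
  rw [Fin.lt_def] at hij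
  simp only [degVec]
  omega

theorem vanderQ_eq_prod (l : List ℕ) :
    vanderQ l = ∏ i, ∏ j ∈ Ioi i, ((degVec l j : ℚ) - degVec l i) := by
  refine prod_congr rfl fun i _ => ?_
  simp only [← prod_filter, Fin.val_fin_lt, filter_lt_eq_Ioi]

theorem vanderQ_ne_zero {l : List ℕ} (hl : l.Pairwise (· ≥ ·)) : vanderQ l ≠ 0 := by
  rw [vanderQ_eq_prod, ← Matrix.det_vandermonde, Matrix.det_vandermonde_ne_zero_iff]
  exact Nat.cast_injective.comp (degVec_strictAnti hl).injective

theorem det_vandermonde_degVec {R : Type*} [CommRing R] [Algebra ℚ R] (l : List ℕ) :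
    (Matrix.vandermonde fun i => (degVec l i : R)).det = algebraMap ℚ R (vanderQ l) := by
  simp only [Matrix.det_vandermonde, vanderQ_eq_prod, map_prod, map_sub, map_natCast]

theorem sum_Icc_sub (m : ℕ) (c : ℤ) :
    ∑ j ∈ Icc 1 m, ((j : ℤ) - (c + 1)) = m.choose 2 - c * m := by
  induction m with
  | zero => simp
  | succ m ih =>
    rw [sum_Icc_succ_top m.succ_pos, ih, Nat.choose_succ_succ' m 1, Nat.choose_one_right]
    push_cast
    ring

theorem degContent_degVec (l : List ℕ) : degContent (degVec l) = contentSum l := by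
  have hrev : ∑ i : Fin l.length, ((i : ℕ).choose 2 - ((l.length : ℤ) - 1) * i)
      = ∑ i : Fin l.length, ((i.rev : ℕ).choose 2 - ((l.length : ℤ) - 1) * (i.rev : ℕ)) :=
    (Equiv.sum_comp Fin.revPerm _).symm
  simp only [degContent, contentSum, hrev, ← sum_sub_distrib, sum_Icc_sub]
  refine sum_congr rfl fun i _ => ?_
  have hdeg : degVec l i = l.get i + i.rev := by
    rw [degVec, Fin.val_rev]
    omega
  have hlen : (l.length : ℤ) = i + 1 + (i.rev : ℕ) := by
    rw [Fin.val_rev]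
    omega
  rw [hdeg, hlen, choose_two_add]
  push_cast
  ring

end DegreeVector

open Polynomial in
theorem wrAppell_first_coeffs_general {R : Type*} [CommRing R] [Algebra ℚ R] {A : ℕ → R[X]}
    (hA : IsAppell A) {l : List ℕ} (hl : vanderQ l ≠ 0) (hn : 2 ≤ l.sum) :
    ((vanderQ l)⁻¹ • appellWronskian A (degVec l)).coeff l.sum = 1 ∧
    ((vanderQ l)⁻¹ • appellWronskian A (degVec l)).coeff (l.sum - 1) = l.sum * (A 1).eval 0 ∧
    ((vanderQ l)⁻¹ • appellWronskian A (degVec l)).coeff (l.sum - 2) =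
      contentSum l * ((A 2).eval 0 - (A 1).eval 0 ^ 2) + l.sum.choose 2 * (A 1).eval 0 ^ 2 := by
  have : IsAddTorsionFree R := .of_module_rat R
  have hW := hA.hasTopCoeffs_appellWronskian (sum_degVec l)
  rw [det_vandermonde_degVec, degContent_degVec] at hW
  have hcancel (x : R) : (vanderQ l)⁻¹ • (algebraMap ℚ R (vanderQ l) * x) = x := by
    rw [← Algebra.smul_def, inv_smul_smul₀ hl]
  refine ⟨?_, ?_, ?_⟩
  · rw [coeff_smul, hW.coeff_self, ← mul_one (algebraMap ℚ R _), hcancel]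
  · rw [coeff_smul, hW.coeff_sub_one (by omega), hcancel]
  · rw [coeff_smul, hW.coeff_sub_two hn, mul_assoc, ← mul_add, hcancel]

theorem wrAppell_eq_smul_appellWronskian (A : ℕ → Polynomial ℚ) (l : List ℕ) :
    wrAppell A l = (vanderQ l)⁻¹ • appellWronskian A (degVec l) :=
  (Polynomial.smul_eq_C_mul _).symm

/-- The first three coefficients of a Wronskian Appell polynomial:
for an Appell sequence `(A_n)` with `z_1 = A_1(0)`, `z_2 = A_2(0)` and a
partition `λ` of `n ≥ 2`, `A_λ` is monic of degree `n`,
`coeff_{n−1}(A_λ) = n z_1`, and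
`coeff_{n−2}(A_λ) = c(λ)(z_2 − z_1²) + C(n,2) z_1²`. -/
theorem wrAppell_first_coeffs (A : ℕ → Polynomial ℚ) (hA0 : A 0 = 1)
    (hA : ∀ n : ℕ, 1 ≤ n → (A n).derivative = (n : ℚ) • A (n - 1))
    (l : List ℕ) (hl : IsPartition l) (hn : 2 ≤ l.sum) :
    (wrAppell A l).coeff l.sum = 1 ∧
    (wrAppell A l).coeff (l.sum - 1) = (l.sum : ℚ) * (A 1).eval 0 ∧
    (wrAppell A l).coeff (l.sum - 2) =
      (contentSum l : ℚ) * ((A 2).eval 0 - ((A 1).eval 0) ^ 2) +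
        (l.sum.choose 2 : ℚ) * ((A 1).eval 0) ^ 2 := by
  rw [wrAppell_eq_smul_appellWronskian]
  exact wrAppell_first_coeffs_general ⟨hA0, hA⟩ (vanderQ_ne_zero hl.1) hn
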